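/- Let H be a Polish space with metric ρ and let ρ̃ be a possibly different distance on H. Define D_{ρ̃} = {(u,v) ∈ H^ℕ × H^ℕ : ρ̃(u_n, v_n) → 0} and the class 𝒢_{ρ̃} of bounded continuous functions on H that are Lipschitz with respect to ρ̃. Suppose 𝒢_{ρ̃} determines measures on (H, ρ) and D_{ρ̃} is measurable. If H₀ ⊆ H is measurable and for each u₀, v₀ ∈ H₀ there is a probability measure Γ on H^ℕ × H^ℕ whose marginals are absolutely continuous with respect to δ_{u₀}P^ℕ and δ_{v₀}P^ℕ respectively, and with Γ(D_{ρ̃}) > 0, then there is at most one ergodic invariant measure μ for P with μ(H₀) > 0. -/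

import Mathlib

open MeasureTheory ProbabilityTheory Filter

/-- `μ` is an invariant probability measure for the Markov kernel `P`. -/
def IsInvariantMeasure {H : Type*} [MeasurableSpace H]
    (P : ProbabilityTheory.Kernel H H) (μ : Measure H) : Prop :=
  μ.bind (fun u => P u) = μ

/-- `μ` is an ergodic invariant measure for `P`. -/
def IsErgodicMeasure {H : Type*} [MeasurableSpace H]
    (P : ProbabilityTheory.Kernel H H) (μ : Measure H) : Prop :=
  IsInvariantMeasure P μ ∧
    ∀ A : Set H, MeasurableSet A →
      (∀ᵐ u ∂μ, P u A = A.indicator (fun _ => (1 : ENNReal)) u) →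
      μ A = 0 ∨ μ A = 1

/-- An invariant measure dominated by an ergodic one has the same null sets. -/
lemma aux_ergodic_ac {H : Type*} [MeasurableSpace H]
    (P : ProbabilityTheory.Kernel H H) [IsMarkovKernel P]
    (μ π : Measure H) [IsProbabilityMeasure μ] [IsFiniteMeasure π]
    (hμ : IsErgodicMeasure P μ) (hπ : π.bind (fun u => P u) = π) (hle : π ≤ μ)
    (h0 : π ≠ 0) (C : Set H) (hC : π C = 0) : μ C = 0 := by
  obtain ⟨hinv, herg⟩ := hμ
  unfold IsInvariantMeasure at hinv
  have hac : π ≪ μ := Measure.absolutelyContinuous_of_le hle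
  set f := π.rnDeriv μ with hf
  have hfm : Measurable f := Measure.measurable_rnDeriv _ _
  have hwd : μ.withDensity f = π := Measure.withDensity_rnDeriv_eq π μ hac
  have key : ∀ s : Set H, π s = 0 ↔ μ ({x | f x ≠ 0} ∩ s) = 0 := by
    intro s
    rw [← withDensity_apply_eq_zero hfm, hwd]
  set B : Set H := {x | f x ≠ 0} with hB
  have hBm : MeasurableSet B := (hfm (measurableSet_singleton 0)).compl
  have hπB : π Bᶜ = 0 := by rw [key]; simp
  have hPm : AEMeasurable (fun u => P u) π := P.measurable.aemeasurable
  have h1 : ∫⁻ u, P u Bᶜ ∂π = 0 := by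
    rw [← Measure.bind_apply hBm.compl hPm, hπ, hπB]
  rw [lintegral_eq_zero_iff (P.measurable_coe hBm.compl)] at h1
  have h2 : ∀ᵐ u ∂μ, u ∈ B → P u B = 1 := by
    have h1' : π {u | ¬ (P u Bᶜ = 0)} = 0 := h1
    rw [key] at h1'
    have : ∀ᵐ u ∂μ, ¬ (u ∈ B ∩ {u | ¬ (P u Bᶜ = 0)}) := by
      rw [ae_iff]; simp only [not_not]; exact h1'
    filter_upwards [this] with u hu hub
    have : P u Bᶜ = 0 := by
      by_contra hne
      exact hu ⟨hub, hne⟩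
    exact (prob_compl_eq_zero_iff hBm).1 this
  have h3 : ∫⁻ u, P u B ∂μ = μ B := by
    rw [← Measure.bind_apply hBm P.measurable.aemeasurable, hinv]
  have h4 : ∫⁻ u in B, P u B ∂μ = μ B := by
    rw [setLIntegral_congr_fun_ae (g := fun _ => 1) hBm h2]; simp
  have h5 : ∫⁻ u in Bᶜ, P u B ∂μ = 0 := by
    have := lintegral_add_compl (μ := μ) (fun u => P u B) hBm
    rw [h3, h4] at this
    have hfin : μ B ≠ ⊤ := measure_ne_top _ _
    exact (ENNReal.add_right_inj hfin).1 (by rw [this, add_zero])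
  rw [lintegral_eq_zero_iff (P.measurable_coe hBm)] at h5
  have h6 : ∀ᵐ u ∂μ, u ∈ Bᶜ → P u B = 0 := (ae_restrict_iff' hBm.compl).1 h5
  have h7 := herg B hBm (by
    filter_upwards [h2, h6] with u hu1 hu2
    by_cases hu : u ∈ B
    · simp [hu, hu1 hu]
    · simp [hu, hu2 hu])
  rcases h7 with h7 | h7
  · exfalso
    apply h0
    rw [← Measure.measure_univ_eq_zero, key]
    simpa using h7
  · have h8 : μ Bᶜ = 0 := (prob_compl_eq_zero_iff hBm).2 h7
    rw [key] at hC
    have : C ⊆ (B ∩ C) ∪ Bᶜ := by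
      intro x hx
      by_cases hxB : x ∈ B
      · exact Or.inl ⟨hxB, hx⟩
      · exact Or.inr hxB
    exact measure_mono_null this (measure_union_null hC h8)

lemma aux_sub_inv {H : Type*} [MeasurableSpace H]
    (P : ProbabilityTheory.Kernel H H) [IsMarkovKernel P]
    (μ ν : Measure H) [IsProbabilityMeasure μ] [IsProbabilityMeasure ν]
    (hμ : IsInvariantMeasure P μ) (hν : IsInvariantMeasure P ν) :
    (μ - ν).bind (fun u => P u) = μ - ν := by
  unfold IsInvariantMeasure at hμ hν
  symm
  apply Measure.eq_of_le_of_measure_univ_eq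
  · apply Measure.sub_le_of_le_add
    have h1 : μ ≤ (μ - ν) + ν := Measure.sub_le_iff_le_add.1 le_rfl
    rw [Measure.le_iff]
    intro s hs
    have hm := P.measurable
    calc μ s = (μ.bind (fun u => P u)) s := by rw [hμ]
      _ = ∫⁻ u, P u s ∂μ := Measure.bind_apply hs hm.aemeasurable
      _ ≤ ∫⁻ u, P u s ∂((μ - ν) + ν) := lintegral_mono' h1 le_rfl
      _ = (μ - ν).bind (fun u => P u) s + ν.bind (fun u => P u) s := by
        rw [lintegral_add_measure, Measure.bind_apply hs hm.aemeasurable,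
          Measure.bind_apply hs hm.aemeasurable]
      _ = _ := by rw [hν]; rfl
  · rw [Measure.bind_apply MeasurableSet.univ P.measurable.aemeasurable]
    simp

/-- Distinct ergodic measures are mutually singular. -/
lemma aux_singular {H : Type*} [MeasurableSpace H]
    (P : ProbabilityTheory.Kernel H H) [IsMarkovKernel P]
    (μ ν : Measure H) [IsProbabilityMeasure μ] [IsProbabilityMeasure ν]
    (hμ : IsErgodicMeasure P μ) (hν : IsErgodicMeasure P ν) (hne : μ ≠ ν) :
    ∃ A : Set H, MeasurableSet A ∧ μ Aᶜ = 0 ∧ ν A = 0 := by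
  obtain ⟨s, hs, h1, h2⟩ := exists_isHahnDecomposition μ ν
  have hnz : ∀ (a b : Measure H) [IsProbabilityMeasure a] [IsProbabilityMeasure b],
      a ≠ b → a - b ≠ 0 := by
    intro a b _ _ hab h
    apply hab
    apply Measure.eq_of_le_of_isProbabilityMeasure
    have := (Measure.sub_le_iff_le_add (μ := a) (ν := b) (ξ := 0)).1 h.le
    simpa using this
  refine ⟨sᶜ, hs.compl, ?_, ?_⟩
  · rw [compl_compl]
    exact aux_ergodic_ac P μ (μ - ν) hμ (aux_sub_inv P μ ν hμ.1 hν.1) Measure.sub_le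
      (hnz μ ν hne) s (Measure.sub_apply_eq_zero_of_restrict_le_restrict h1 hs)
  · exact aux_ergodic_ac P ν (ν - μ) hν (aux_sub_inv P ν μ hν.1 hμ.1) Measure.sub_le
      (hnz ν μ hne.symm) sᶜ (Measure.sub_apply_eq_zero_of_restrict_le_restrict h2 hs.compl)

/-- The class of bounded continuous functions that are Lipschitz for `ρt`. -/
def AuxG {H : Type*} [TopologicalSpace H] (ρt : H → H → ℝ) (φ : H → ℝ) : Prop :=
  Continuous φ ∧ ∃ Lip : ℝ, ∀ u v, |φ u - φ v| ≤ Lip * ρt u v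

lemma AuxG.inf {H : Type*} [TopologicalSpace H] {ρt : H → H → ℝ}
    (h0 : ∀ u v, 0 ≤ ρt u v) {φ ψ : H → ℝ} (hφ : AuxG ρt φ) (hψ : AuxG ρt ψ) :
    AuxG ρt (fun x => min (φ x) (ψ x)) := by
  obtain ⟨c1, L1, h1⟩ := hφ
  obtain ⟨c2, L2, h2⟩ := hψ
  refine ⟨c1.min c2, max L1 L2, fun u v => ?_⟩
  refine (abs_min_sub_min_le_max _ _ _ _).trans (max_le ?_ ?_)
  · exact (h1 u v).trans (mul_le_mul_of_nonneg_right (le_max_left _ _) (h0 u v))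
  · exact (h2 u v).trans (mul_le_mul_of_nonneg_right (le_max_right _ _) (h0 u v))

lemma AuxG.sup {H : Type*} [TopologicalSpace H] {ρt : H → H → ℝ}
    (h0 : ∀ u v, 0 ≤ ρt u v) {φ ψ : H → ℝ} (hφ : AuxG ρt φ) (hψ : AuxG ρt ψ) :
    AuxG ρt (fun x => max (φ x) (ψ x)) := by
  obtain ⟨c1, L1, h1⟩ := hφ
  obtain ⟨c2, L2, h2⟩ := hψ
  refine ⟨c1.max c2, max L1 L2, fun u v => ?_⟩
  refine (abs_max_sub_max_le_max _ _ _ _).trans (max_le ?_ ?_)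
  · exact (h1 u v).trans (mul_le_mul_of_nonneg_right (le_max_left _ _) (h0 u v))
  · exact (h2 u v).trans (mul_le_mul_of_nonneg_right (le_max_right _ _) (h0 u v))

lemma AuxG.const {H : Type*} [TopologicalSpace H] {ρt : H → H → ℝ} (c : ℝ) :
    AuxG ρt (fun _ => c) := ⟨continuous_const, 0, fun u v => by simp⟩

lemma AuxG.affine {H : Type*} [TopologicalSpace H] {ρt : H → H → ℝ} (a b : ℝ)
    {φ : H → ℝ} (hφ : AuxG ρt φ) : AuxG ρt (fun x => a * φ x + b) := by
  obtain ⟨c1, L1, h1⟩ := hφ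
  refine ⟨by fun_prop, |a| * L1, fun u v => ?_⟩
  have : a * φ u + b - (a * φ v + b) = a * (φ u - φ v) := by ring
  rw [this, abs_mul, mul_assoc]
  exact mul_le_mul_of_nonneg_left (h1 u v) (abs_nonneg a)

/-- Urysohn for disjoint compact sets inside the class. -/
lemma aux_urysohn {H : Type*} [TopologicalSpace H] {ρt : H → H → ℝ}
    (h0 : ∀ u v, 0 ≤ ρt u v)
    (hsep : ∀ x y, x ≠ y → ∃ φ, AuxG ρt φ ∧ φ x ≠ φ y)
    {K K' : Set H} (hK : IsCompact K) (hK' : IsCompact K') (hd : Disjoint K K') :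
    ∃ φ, AuxG ρt φ ∧ (∀ x ∈ K, 1 ≤ φ x) ∧ (∀ x ∈ K', φ x ≤ 0) := by
  have step1 : ∀ x ∈ K, ∃ φ, AuxG ρt φ ∧ (∀ᶠ z in nhds x, 1 ≤ φ z) ∧ (∀ y ∈ K', φ y ≤ 0) := by
    intro x hx
    refine hK'.induction_on
      (p := fun t => ∃ φ, AuxG ρt φ ∧ (∀ᶠ z in nhds x, 1 ≤ φ z) ∧ (∀ y ∈ t, φ y ≤ 0)) ?_ ?_ ?_ ?_
    · exact ⟨fun _ => 1, AuxG.const 1, by simp, by simp⟩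
    · rintro s t hst ⟨φ, h1, h2, h3⟩
      exact ⟨φ, h1, h2, fun y hy => h3 y (hst hy)⟩
    · rintro s t ⟨φ, h1, h2, h3⟩ ⟨ψ, g1, g2, g3⟩
      refine ⟨_, h1.inf h0 g1, ?_, ?_⟩
      · filter_upwards [h2, g2] with z a b using le_min a b
      · rintro y (hy | hy)
        · exact (min_le_left _ _).trans (h3 y hy)
        · exact (min_le_right _ _).trans (g3 y hy)
    · intro y hy
      have hxy : x ≠ y := fun h => Set.disjoint_left.1 hd hx (h ▸ hy)
      obtain ⟨φ, hφ, hne⟩ := hsep x y hxy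
      have hne' : φ x - φ y ≠ 0 := sub_ne_zero.2 hne
      set ψ : H → ℝ := fun z => (3 / (φ x - φ y)) * φ z + (-1 - (3 / (φ x - φ y)) * φ y) with hψ
      have hG : AuxG ρt ψ := hφ.affine _ _
      have hx2 : ψ x = 2 := by simp only [hψ]; field_simp; ring
      have hy2 : ψ y = -1 := by simp only [hψ]; ring
      refine ⟨{z | ψ z ≤ 0}, ?_, ψ, hG, ?_, fun z hz => hz⟩
      · apply mem_nhdsWithin_of_mem_nhds
        filter_upwards [hG.1.continuousAt.eventually_lt (g := fun _ => (0:ℝ)) (x₀ := y)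
          continuousAt_const (by rw [hy2]; norm_num)] with z hz using hz.le
      · filter_upwards [continuousAt_const.eventually_lt (f := fun _ => (1:ℝ)) (x₀ := x)
          hG.1.continuousAt (by rw [hx2]; norm_num)] with z hz using hz.le
  refine hK.induction_on
    (p := fun t => ∃ φ, AuxG ρt φ ∧ (∀ x ∈ t, 1 ≤ φ x) ∧ (∀ x ∈ K', φ x ≤ 0)) ?_ ?_ ?_ ?_
  · exact ⟨fun _ => 0, AuxG.const 0, by simp, by simp⟩
  · rintro s t hst ⟨φ, h1, h2, h3⟩
    exact ⟨φ, h1, fun y hy => h2 y (hst hy), h3⟩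
  · rintro s t ⟨φ, h1, h2, h3⟩ ⟨ψ, g1, g2, g3⟩
    refine ⟨_, h1.sup h0 g1, ?_, fun y hy => max_le (h3 y hy) (g3 y hy)⟩
    rintro y (hy | hy)
    · exact (h2 y hy).trans (le_max_left _ _)
    · exact (g2 y hy).trans (le_max_right _ _)
  · intro x hx
    obtain ⟨φ, h1, h2, h3⟩ := step1 x hx
    exact ⟨{z | 1 ≤ φ z}, mem_nhdsWithin_of_mem_nhds h2, φ, h1, fun z hz => hz, h3⟩

/-- Iterates of the kernel: `auxIter P n` is `P ^ (n + 1)`. -/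
noncomputable def auxIter {H : Type*} [MeasurableSpace H] (P : ProbabilityTheory.Kernel H H) :
    ℕ → ProbabilityTheory.Kernel H H
  | 0 => P
  | n + 1 => (auxIter P n).comp P

lemma auxIter_inv {H : Type*} [MeasurableSpace H] (P : ProbabilityTheory.Kernel H H)
    (μ : Measure H) (hμ : IsInvariantMeasure P μ) (n : ℕ) :
    μ.bind (fun u => auxIter P n u) = μ := by
  unfold IsInvariantMeasure at hμ
  induction n with
  | zero => exact hμ
  | succ n ih =>
    have : (fun u => auxIter P (n + 1) u) = fun u => (P u).bind (fun v => auxIter P n v) := by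
      funext u
      exact Kernel.comp_apply _ _ _
    rw [this, ← Measure.bind_bind P.measurable.aemeasurable
      (auxIter P n).measurable.aemeasurable, hμ, ih]

lemma auxIter_path {H : Type*} [MeasurableSpace H]
    (P : ProbabilityTheory.Kernel H H) [IsMarkovKernel P]
    (pathLaw : H → Measure (ℕ → H))
    (hpathProb : ∀ u, IsProbabilityMeasure (pathLaw u))
    (hpathFirst : ∀ u, (pathLaw u).map (fun ω => ω 0) = P u)
    (hpathMarkov : ∀ u, (pathLaw u).map (fun ω k => ω (k + 1)) = (P u).bind pathLaw)
    (n : ℕ) (u : H) : (pathLaw u).map (fun ω => ω n) = auxIter P n u := by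
  have hae : ∀ u, AEMeasurable pathLaw (P u) := by
    intro u
    by_contra hcon
    have h1 := hpathMarkov u
    have h2 : (P u).bind pathLaw = 0 := by
      unfold Measure.bind
      rw [Measure.map_of_not_aemeasurable hcon, Measure.join_zero]
    rw [h2] at h1
    have hm : Measurable (fun (ω : ℕ → H) (k : ℕ) => ω (k + 1)) := by fun_prop
    have := hpathProb u
    have h3 : IsProbabilityMeasure ((pathLaw u).map (fun ω k => ω (k + 1))) :=
      Measure.isProbabilityMeasure_map hm.aemeasurable
    rw [h1] at h3
    exact h3.ne_zero _ rfl
  induction n generalizing u with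
  | zero => exact hpathFirst u
  | succ n ih =>
    have hm : Measurable (fun (ω : ℕ → H) (k : ℕ) => ω (k + 1)) := by fun_prop
    have hn : Measurable (fun (ω : ℕ → H) => ω n) := by fun_prop
    have h1 : (pathLaw u).map (fun ω => ω (n + 1)) = ((P u).bind pathLaw).map (fun ω => ω n) := by
      rw [← hpathMarkov, Measure.map_map hn hm]; rfl
    rw [h1]
    ext s hs
    rw [Measure.map_apply hn hs, Measure.bind_apply (hn hs) (hae u)]
    have h2 : auxIter P (n + 1) u = (P u).bind (fun v => auxIter P n v) :=
      Kernel.comp_apply _ _ _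
    rw [h2, Measure.bind_apply hs (auxIter P n).measurable.aemeasurable]
    refine lintegral_congr fun v => ?_
    rw [← ih v, Measure.map_apply hn hs]

/-- Fatou argument producing a good pair of starting points. -/
lemma aux_good_pair {H : Type*} [MeasurableSpace H]
    (P : ProbabilityTheory.Kernel H H)
    (μ ν : Measure H) [IsProbabilityMeasure μ] [IsProbabilityMeasure ν]
    (hμ : IsInvariantMeasure P μ) (hν : IsInvariantMeasure P ν)
    (S T : ℕ → Set H) (hS : ∀ k, MeasurableSet (S k)) (hT : ∀ k, MeasurableSet (T k))
    (ε : ℕ → ENNReal) (hε : ∑' k, ε k ≠ ⊤) (hle : ∀ k, μ (S k) + ν (T k) ≤ ε k)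
    (H₀ : Set H) (hH₀ : MeasurableSet H₀) (h1 : 0 < μ H₀) (h2 : 0 < ν H₀) :
    ∃ u ∈ H₀, ∃ v ∈ H₀, ∀ δ : ENNReal, 0 < δ → ∃ k, ∃ᶠ n in atTop,
      auxIter P n u (S k) + auxIter P n v (T k) < δ := by
  set h : ℕ → ℕ → H × H → ENNReal := fun k n p =>
    auxIter P n p.1 (S k) + auxIter P n p.2 (T k) with hh
  have hm1 : ∀ k n, Measurable (fun p : H × H => auxIter P n p.1 (S k)) := fun k n =>
    ((auxIter P n).measurable_coe (hS k)).comp measurable_fst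
  have hm2 : ∀ k n, Measurable (fun p : H × H => auxIter P n p.2 (T k)) := fun k n =>
    ((auxIter P n).measurable_coe (hT k)).comp measurable_snd
  have hm : ∀ k n, Measurable (h k n) := fun k n => (hm1 k n).add (hm2 k n)
  have hint : ∀ k n, ∫⁻ p, h k n p ∂(μ.prod ν) ≤ ε k := by
    intro k n
    have e1 : ∫⁻ p : H × H, auxIter P n p.1 (S k) ∂(μ.prod ν) = μ (S k) := by
      rw [lintegral_prod _ (hm1 k n).aemeasurable]
      simp only [lintegral_const, measure_univ, mul_one]
      rw [← Measure.bind_apply (hS k) (auxIter P n).measurable.aemeasurable, auxIter_inv P μ hμ]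
    have e2 : ∫⁻ p : H × H, auxIter P n p.2 (T k) ∂(μ.prod ν) = ν (T k) := by
      rw [lintegral_prod _ (hm2 k n).aemeasurable]
      simp only [lintegral_const, measure_univ, mul_one]
      rw [← Measure.bind_apply (hT k) (auxIter P n).measurable.aemeasurable, auxIter_inv P ν hν]
    simp only [hh]
    rw [lintegral_add_left (hm1 k n), e1, e2]
    exact hle k
  set g : ℕ → H × H → ENNReal := fun k p => liminf (fun n => h k n p) atTop with hg
  have hgm : ∀ k, Measurable (g k) := fun k => Measurable.liminf (hm k)
  have hgint : ∀ k, ∫⁻ p, g k p ∂(μ.prod ν) ≤ ε k := by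
    intro k
    refine (lintegral_liminf_le (hm k)).trans ?_
    refine (liminf_le_liminf (Eventually.of_forall (hint k))).trans ?_
    simp
  have hsum : ∫⁻ p, ∑' k, g k p ∂(μ.prod ν) ≠ ⊤ := by
    rw [lintegral_tsum fun k => (hgm k).aemeasurable]
    exact ne_top_of_le_ne_top hε (ENNReal.tsum_le_tsum hgint)
  have hae := ae_lt_top (Measurable.tsum hgm) hsum
  have hpos : (μ.prod ν) (H₀ ×ˢ H₀) ≠ 0 := by
    rw [Measure.prod_prod]
    exact (ENNReal.mul_pos h1.ne' h2.ne').ne'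
  have hex : ∃ p ∈ H₀ ×ˢ H₀, ∑' k, g k p < ⊤ := by
    by_contra! hcon
    apply hpos
    rw [ae_iff] at hae
    refine measure_mono_null (fun p hp => ?_) hae
    simpa using hcon p hp
  obtain ⟨⟨u, v⟩, ⟨hu, hv⟩, hfin⟩ := hex
  refine ⟨u, hu, v, hv, fun δ hδ => ?_⟩
  have ht := ENNReal.tendsto_atTop_zero_of_tsum_ne_top hfin.ne
  obtain ⟨k, hk⟩ := (ht.eventually (gt_mem_nhds hδ)).exists
  exact ⟨k, frequently_lt_of_liminf_lt (by isBoundedDefault) hk⟩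

lemma aux_ac {X : Type*} [MeasurableSpace X] (γ q : Measure X) [IsFiniteMeasure γ]
    [IsFiniteMeasure q] (hac : γ ≪ q) (a : ENNReal) (ha : a ≠ 0) :
    ∃ δ > 0, ∀ s, MeasurableSet s → q s < δ → γ s < a := by
  have hwd : q.withDensity (γ.rnDeriv q) = γ := Measure.withDensity_rnDeriv_eq γ q hac
  obtain ⟨δ, hδ, h⟩ := exists_pos_setLIntegral_lt_of_measure_lt (μ := q) (f := γ.rnDeriv q)
    (Measure.lintegral_rnDeriv_lt_top γ q).ne ha
  refine ⟨δ, hδ, fun s hs hq => ?_⟩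
  rw [← hwd, withDensity_apply _ hs]
  exact h s hq

/-- Corollary 2.2: uniqueness of the ergodic invariant measure via asymptotic couplings
which contract in a possibly different distance `ρt` on `H`.  `𝒢_{ρ̃}` is the class of
bounded continuous functions which are Lipschitz with respect to `ρt`, `D_{ρ̃}` is the set
of pairs of sequences whose `ρt`-distance tends to `0`, and `pathLaw u₀` is `δ_{u₀}P^ℕ`. -/
theorem unique_ergodic_of_asymptotic_coupling_dist
    {H : Type*} [MetricSpace H] [PolishSpace H] [MeasurableSpace H] [BorelSpace H]
    (P : ProbabilityTheory.Kernel H H) [IsMarkovKernel P]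
    (pathLaw : H → Measure (ℕ → H))
    (hpathProb : ∀ u, IsProbabilityMeasure (pathLaw u))
    (hpathFirst : ∀ u, (pathLaw u).map (fun ω => ω 0) = P u)
    (hpathMarkov : ∀ u, (pathLaw u).map (fun ω k => ω (k + 1)) = (P u).bind pathLaw)
    (ρt : H → H → ℝ)
    (hρt_nonneg : ∀ u v, 0 ≤ ρt u v)
    (hρt_self : ∀ u, ρt u u = 0)
    (hρt_symm : ∀ u v, ρt u v = ρt v u)
    (hρt_triangle : ∀ u v w, ρt u w ≤ ρt u v + ρt v w)
    (hdet : ∀ μ ν : Measure H, IsProbabilityMeasure μ → IsProbabilityMeasure ν →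
      (∀ φ : H → ℝ, Continuous φ → (∃ C : ℝ, ∀ x, |φ x| ≤ C) →
        (∃ Lip : ℝ, ∀ u v, |φ u - φ v| ≤ Lip * ρt u v) →
        ∫ x, φ x ∂μ = ∫ x, φ x ∂ν) → μ = ν)
    (hDmeas : MeasurableSet {p : (ℕ → H) × (ℕ → H) |
      Tendsto (fun n => ρt (p.1 n) (p.2 n)) atTop (nhds 0)})
    (H₀ : Set H) (hH₀ : MeasurableSet H₀)
    (hcouple : ∀ u₀ ∈ H₀, ∀ v₀ ∈ H₀,
      ∃ Γ : Measure ((ℕ → H) × (ℕ → H)), IsProbabilityMeasure Γ ∧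
        Γ.map Prod.fst ≪ pathLaw u₀ ∧ Γ.map Prod.snd ≪ pathLaw v₀ ∧
        0 < Γ {p : (ℕ → H) × (ℕ → H) |
          Tendsto (fun n => ρt (p.1 n) (p.2 n)) atTop (nhds 0)}) :
    ∀ μ ν : Measure H, IsProbabilityMeasure μ → IsProbabilityMeasure ν →
      IsErgodicMeasure P μ → IsErgodicMeasure P ν →
      0 < μ H₀ → 0 < ν H₀ → μ = ν := by
  intro μ ν hμp hνp hμ hν hμ0 hν0
  by_contra hne
  obtain ⟨A, hA, hμA, hνA⟩ := aux_singular P μ ν hμ hν hne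
  have hsep : ∀ x y, x ≠ y → ∃ φ, AuxG ρt φ ∧ φ x ≠ φ y := by
    intro x y hxy
    by_contra! hcon
    apply hxy
    have := hdet (Measure.dirac x) (Measure.dirac y) inferInstance inferInstance (by
      intro φ hc _ hL
      rw [integral_dirac, integral_dirac]
      exact hcon φ ⟨hc, hL⟩)
    exact dirac_eq_dirac_iff.1 this
  -- separating functions
  obtain ⟨ε, hεpos, hεsum⟩ := ENNReal.exists_pos_sum_of_countable' (ε := 1) one_ne_zero ℕ
  have hφ : ∀ k : ℕ, ∃ φ, AuxG ρt φ ∧ μ {x | φ x < 1} + ν {x | 0 < φ x} ≤ ε k := by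
    intro k
    have hε2 : ε k / 2 ≠ 0 := (ENNReal.half_pos (hεpos k).ne').ne'
    obtain ⟨K, hKA, hK, hKm⟩ := hA.exists_isCompact_sdiff_lt (measure_ne_top μ A) hε2
    obtain ⟨K', hKA', hK', hKm'⟩ := hA.compl.exists_isCompact_sdiff_lt (measure_ne_top ν Aᶜ) hε2
    have hd : Disjoint K K' :=
      (disjoint_compl_right (a := A)).mono hKA hKA'
    obtain ⟨φ, h1, h2, h3⟩ := aux_urysohn hρt_nonneg hsep hK hK' hd
    refine ⟨φ, h1, ?_⟩
    rw [← ENNReal.add_halves (ε k)]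
    refine add_le_add ?_ ?_
    · have hsub : {x | φ x < 1} ⊆ Aᶜ ∪ (A \ K) := by
        intro x hx
        by_cases hxA : x ∈ A
        · exact Or.inr ⟨hxA, fun hxK => absurd (h2 x hxK) (not_le.2 hx)⟩
        · exact Or.inl hxA
      refine (measure_mono hsub).trans ((measure_union_le _ _).trans ?_)
      rw [hμA, zero_add]
      exact hKm.le
    · have hsub : {x | 0 < φ x} ⊆ A ∪ (Aᶜ \ K') := by
        intro x hx
        by_cases hxA : x ∈ A
        · exact Or.inl hxA
        · exact Or.inr ⟨hxA, fun hxK => absurd (h3 x hxK) (not_le.2 hx)⟩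
      refine (measure_mono hsub).trans ((measure_union_le _ _).trans ?_)
      rw [hνA, zero_add]
      exact hKm'.le
  choose φ hG hsmall using hφ
  have hS : ∀ k, MeasurableSet {x | φ k x < 1} := fun k =>
    (isOpen_lt (hG k).1 continuous_const).measurableSet
  have hT : ∀ k, MeasurableSet {x | 0 < φ k x} := fun k =>
    (isOpen_lt continuous_const (hG k).1).measurableSet
  obtain ⟨u, hu, v, hv, hgood⟩ := aux_good_pair P μ ν hμ.1 hν.1 _ _ hS hT ε
    (hεsum.trans ENNReal.one_lt_top).ne hsmall H₀ hH₀ hμ0 hν0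
  obtain ⟨Γ, hΓ, hac1, hac2, hpos⟩ := hcouple u hu v hv
  set D : Set ((ℕ → H) × (ℕ → H)) := {p | Tendsto (fun n => ρt (p.1 n) (p.2 n)) atTop (nhds 0)}
    with hD
  have := hpathProb u
  have := hpathProb v
  have ha3 : Γ D / 3 ≠ 0 := (ENNReal.div_pos hpos.ne' (by norm_num)).ne'
  obtain ⟨δ1, hδ1, hd1⟩ := aux_ac (Γ.map Prod.fst) (pathLaw u) hac1 _ ha3
  obtain ⟨δ2, hδ2, hd2⟩ := aux_ac (Γ.map Prod.snd) (pathLaw v) hac2 _ ha3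
  obtain ⟨k, hk⟩ := hgood (min δ1 δ2) (lt_min hδ1 hδ2)
  -- the sets on which the two trajectories stay apart
  set E : ℕ → Set ((ℕ → H) × (ℕ → H)) := fun n =>
    D ∩ ({p | φ k (p.1 n) < 1}ᶜ ∩ {p | 0 < φ k (p.2 n)}ᶜ) with hE
  have hm1 : ∀ n, MeasurableSet {p : (ℕ → H) × (ℕ → H) | φ k (p.1 n) < 1} := fun n =>
    by
    have hp : Measurable fun p : (ℕ → H) × (ℕ → H) => p.1 n := by fun_prop
    exact hp (hS k)
  have hm2 : ∀ n, MeasurableSet {p : (ℕ → H) × (ℕ → H) | 0 < φ k (p.2 n)} := fun n =>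
    by
    have hp : Measurable fun p : (ℕ → H) × (ℕ → H) => p.2 n := by fun_prop
    exact hp (hT k)
  have hEm : ∀ n, MeasurableSet (E n) := fun n =>
    hDmeas.inter ((hm1 n).compl.inter (hm2 n).compl)
  have hlim : Tendsto (fun n => Γ (E n)) atTop (nhds (Γ ∅)) := by
    refine tendsto_measure_of_tendsto_indicator_of_isFiniteMeasure atTop Γ hEm fun p => ?_
    by_cases hp : p ∈ D
    · obtain ⟨L, hL⟩ := (hG k).2
      have hp' : Tendsto (fun n => L * ρt (p.1 n) (p.2 n)) atTop (nhds (L * 0)) :=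
        Tendsto.const_mul L hp
      rw [mul_zero] at hp'
      filter_upwards [hp'.eventually (gt_mem_nhds one_pos)] with n hn
      simp only [Set.mem_empty_iff_false, iff_false]
      rintro ⟨-, h1, h2⟩
      have h1' : 1 ≤ φ k (p.1 n) := not_lt.1 h1
      have h2' : φ k (p.2 n) ≤ 0 := not_lt.1 h2
      have h3 := (le_abs_self _).trans (hL (p.1 n) (p.2 n))
      linarith
    · exact Eventually.of_forall fun n => by simp [hE, hp]
  rw [measure_empty] at hlim
  obtain ⟨n, hn, hEn⟩ := (hk.and_eventually
    (hlim.eventually (gt_mem_nhds (pos_iff_ne_zero.2 ha3)))).exists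
  have hb1 : Γ {p | φ k (p.1 n) < 1} < Γ D / 3 := by
    have hms : MeasurableSet {ω : ℕ → H | φ k (ω n) < 1} := by
      have hp : Measurable fun ω : ℕ → H => ω n := by fun_prop
      exact hp (hS k)
    have h := hd1 _ hms (by
      have e := auxIter_path P pathLaw hpathProb hpathFirst hpathMarkov n u
      have e2 : pathLaw u {ω : ℕ → H | φ k (ω n) < 1} = auxIter P n u {x | φ k x < 1} := by
        rw [← e, Measure.map_apply (measurable_pi_apply n) (hS k)]; rfl
      rw [e2]
      exact (le_self_add.trans_lt hn).trans_le (min_le_left _ _))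
    rwa [Measure.map_apply measurable_fst hms] at h
  have hb2 : Γ {p | 0 < φ k (p.2 n)} < Γ D / 3 := by
    have hms : MeasurableSet {ω : ℕ → H | 0 < φ k (ω n)} := by
      have hp : Measurable fun ω : ℕ → H => ω n := by fun_prop
      exact hp (hT k)
    have h := hd2 _ hms (by
      have e := auxIter_path P pathLaw hpathProb hpathFirst hpathMarkov n v
      have e2 : pathLaw v {ω : ℕ → H | 0 < φ k (ω n)} = auxIter P n v {x | 0 < φ k x} := by
        rw [← e, Measure.map_apply (measurable_pi_apply n) (hT k)]; rfl
      rw [e2]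
      exact (le_add_self.trans_lt hn).trans_le (min_le_right _ _))
    rwa [Measure.map_apply measurable_snd hms] at h
  have hcover : D ⊆ E n ∪ ({p | φ k (p.1 n) < 1} ∪ {p | 0 < φ k (p.2 n)}) := by
    intro p hp
    by_cases h1 : φ k (p.1 n) < 1
    · exact Or.inr (Or.inl h1)
    · by_cases h2 : 0 < φ k (p.2 n)
      · exact Or.inr (Or.inr h2)
      · exact Or.inl ⟨hp, h1, h2⟩
  have hfinal : Γ D < Γ D := by
    calc Γ D ≤ Γ (E n) + (Γ {p | φ k (p.1 n) < 1} + Γ {p | 0 < φ k (p.2 n)}) :=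
          (measure_mono hcover).trans ((measure_union_le _ _).trans
            (add_le_add le_rfl (measure_union_le _ _)))
      _ < Γ D / 3 + (Γ D / 3 + Γ D / 3) :=
          ENNReal.add_lt_add hEn (ENNReal.add_lt_add hb1 hb2)
      _ = Γ D := by rw [← add_assoc]; exact ENNReal.add_thirds _
  exact lt_irrefl _ hfinal
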